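/- arXiv:2501.18725 — 6 statements merged into one kernel-verified Lean document; each statement's English description precedes it below -/
import Mathlib

section
/- Let (X, d) be a metric space, let o, z, w, z', w' ∈ X and let β ∈ (0,1) satisfy d(z, w) ≤ β · d(o, z). Set a = d(o, w)/(1+β). Assume z' lies between o and z at distance a from o, i.e. d(o, z') = a and d(o, z') + d(z', z) = d(o, z), and similarly d(o, w') = a and d(o, w') + d(w', w) = d(o, w). Then d(z', w') ≤ (4β/(1−β²)) · d(o, w). In particular, if β < 1/5 then d(z', w') ≤ a. -/
theorem two_div_one_sub_sub_two_div_one_add {K : Type*} [Field K] {x : K}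
    (hsub : 1 - x ≠ 0) (hadd : 1 + x ≠ 0) :
    2 / (1 - x) - 2 / (1 + x) = 4 * x / (1 - x ^ 2) := by
  rw [show 1 - x ^ 2 = (1 - x) * (1 + x) by ring, div_sub_div _ _ hsub hadd]
  ring

theorem four_mul_div_one_sub_sq_le_inv_one_add {K : Type*} [Field K] [LinearOrder K]
    [IsStrictOrderedRing K] {x : K} (hx0 : 0 ≤ x) (hx : x ≤ 1 / 5) :
    4 * x / (1 - x ^ 2) ≤ (1 + x)⁻¹ := by
  have hsub : 0 < 1 - x := by linarith
  have hratio : 4 * x / (1 - x) ≤ 1 := by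
    rw [div_le_one hsub]
    linarith
  calc 4 * x / (1 - x ^ 2) = 4 * x / (1 - x) * (1 + x)⁻¹ := by
        rw [show 1 - x ^ 2 = (1 - x) * (1 + x) by ring, ← div_div, div_eq_mul_inv _ (1 + x)]
    _ ≤ (1 + x)⁻¹ := mul_le_of_le_one_left (by positivity) hratio

section

variable {X : Type*} [PseudoMetricSpace X] {o z w z' w' : X} {β : ℝ}

theorem dist_le_of_dist_add_dist_eq {p : X} (hz : dist o z' + dist z' z = dist o z)
    (hw : dist p w' + dist w' w = dist p w) :
    dist z' w' ≤ (dist o z - dist o z') + dist z w + (dist p w - dist p w') :=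
  calc dist z' w' ≤ dist z' z + dist z w + dist w w' := dist_triangle4 z' z w w'
    _ = (dist o z - dist o z') + dist z w + (dist p w - dist p w') := by
      rw [dist_comm w w', eq_sub_of_add_eq' hz, eq_sub_of_add_eq' hw]

theorem dist_le_div_one_sub_of_dist_le_mul (hβ : β < 1) (h : dist z w ≤ β * dist o z) :
    dist o z ≤ dist o w / (1 - β) := by
  have htri : dist o z ≤ dist o w + dist z w := dist_triangle_right o z w
  rw [le_div_iff₀ (sub_pos.2 hβ)]
  linarith

theorem dist_between_points_comparison_general {a : ℝ} (hβ0 : 0 ≤ β) (hβ1 : β < 1)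
    (h : dist z w ≤ β * dist o z) (ha : a = dist o w / (1 + β))
    (hz' : dist o z' = a) (hz'btw : dist o z' + dist z' z = dist o z)
    (hw' : dist o w' = a) (hw'btw : dist o w' + dist w' w = dist o w) :
    dist z' w' ≤ 4 * β / (1 - β ^ 2) * dist o w ∧ (β ≤ 1 / 5 → dist z' w' ≤ a) := by
  have hsub : 1 - β ≠ 0 := (sub_pos.2 hβ1).ne'
  have hadd : 1 + β ≠ 0 := by positivity
  have hbound : dist z' w' ≤ 4 * β / (1 - β ^ 2) * dist o w :=
    calc dist z' w' ≤ (dist o z - a) + dist z w + (dist o w - a) := by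
          simpa only [hz', hw'] using dist_le_of_dist_add_dist_eq hz'btw hw'btw
      _ ≤ (1 + β) * dist o z + dist o w - 2 * a := by linarith
      _ ≤ (1 + β) * (dist o w / (1 - β)) + dist o w - 2 * a := by
          gcongr
          exact dist_le_div_one_sub_of_dist_le_mul hβ1 h
      _ = (2 / (1 - β) - 2 / (1 + β)) * dist o w := by
          rw [ha]
          field_simp
          ring
      _ = 4 * β / (1 - β ^ 2) * dist o w := by
          rw [two_div_one_sub_sub_two_div_one_add hsub hadd]
  refine ⟨hbound, fun hβ ↦ hbound.trans ?_⟩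
  rw [ha, div_eq_inv_mul (dist o w)]
  gcongr
  exact four_mul_div_one_sub_sq_le_inv_one_add hβ0 hβ

end

theorem dist_between_points_comparison {X : Type*} [MetricSpace X]
    (o z w z' w' : X) (β : ℝ) (hβ0 : 0 < β) (hβ1 : β < 1)
    (h : dist z w ≤ β * dist o z)
    (a : ℝ) (ha : a = dist o w / (1 + β))
    (hz'dist : dist o z' = a) (hz'btw : dist o z' + dist z' z = dist o z)
    (hw'dist : dist o w' = a) (hw'btw : dist o w' + dist w' w = dist o w) :
    dist z' w' ≤ (4 * β / (1 - β ^ 2)) * dist o w ∧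
      (β < 1 / 5 → dist z' w' ≤ a) :=
  (dist_between_points_comparison_general hβ0.le hβ1 h ha hz'dist hz'btw hw'dist hw'btw).imp_right
    fun hsmall hβ ↦ hsmall hβ.le
end

section
/- Let a, b, c be real numbers with a ≥ log 2, b > 0, c > 0, b/2 ≥ −log(sinh(1)/2), and suppose that sinh(1)/sinh(c) ≤ 2·sinh(b/2)/sinh(a). Then c ≥ a − b. -/
/-!
The identity `sinh (x + y) = exp x * sinh y + exp (-y) * sinh x` gives
`exp x * sinh y ≤ sinh (x + y)` for `x ≥ 0`. Since `sinh 1 ≥ 1` and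
`2 * sinh (b / 2) ≤ exp (b / 2)`, the comparison inequality bounds `sinh a` by
`exp (b / 2) * sinh c`, hence by `sinh (b / 2 + c)`, and `sinh` is increasing.
-/

open Real

theorem sinh_add_eq_exp_mul_sinh_add (x y : ℝ) :
    sinh (x + y) = exp x * sinh y + exp (-y) * sinh x := by
  rw [sinh_add, ← cosh_add_sinh x, ← cosh_sub_sinh y]
  ring

theorem exp_mul_sinh_le_sinh_add {x : ℝ} (hx : 0 ≤ x) (y : ℝ) :
    exp x * sinh y ≤ sinh (x + y) := by
  rw [sinh_add_eq_exp_mul_sinh_add]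
  exact le_add_of_nonneg_right (mul_nonneg (exp_pos _).le (sinh_nonneg_iff.2 hx))

theorem two_mul_sinh_le_exp (x : ℝ) : 2 * sinh x ≤ exp x := by
  linarith [cosh_add_sinh x, sinh_lt_cosh x]

theorem sinh_comparison_core_general {a b c s : ℝ} (hs : 1 ≤ s) (hb : 0 ≤ b) (hc : 0 < c)
    (h : s / sinh c ≤ 2 * sinh (b / 2) / sinh a) : a - b / 2 ≤ c := by
  rcases le_or_gt a 0 with ha | ha
  · linarith
  have hsinh_a : 0 < sinh a := sinh_pos_iff.2 ha
  have hsinh_c : 0 < sinh c := sinh_pos_iff.2 hc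
  have hsinh : sinh a ≤ sinh (b / 2 + c) :=
    calc sinh a ≤ s * sinh a := le_mul_of_one_le_left hsinh_a.le hs
      _ ≤ 2 * sinh (b / 2) * sinh c := (div_le_div_iff₀ hsinh_c hsinh_a).1 h
      _ ≤ exp (b / 2) * sinh c := by gcongr; exact two_mul_sinh_le_exp _
      _ ≤ sinh (b / 2 + c) := exp_mul_sinh_le_sinh_add (by positivity) c
  exact sub_le_iff_le_add'.2 (sinh_le_sinh.1 hsinh)

theorem sinh_comparison_core (a b c : ℝ)
    (ha : Real.log 2 ≤ a) (hb : 0 < b) (hc : 0 < c)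
    (hb2 : -Real.log (Real.sinh 1 / 2) ≤ b / 2)
    (h : Real.sinh 1 / Real.sinh c ≤ 2 * Real.sinh (b / 2) / Real.sinh a) :
    a - b ≤ c := by
  have hsinh_one : 1 ≤ sinh 1 := self_le_sinh_iff.2 zero_le_one
  linarith [sinh_comparison_core_general hsinh_one hb.le hc h]
end

section
/- Let x > 0, λ ≥ 2, y ≥ 0 and ρ > 0 be real numbers, and define h(t) = (x(λ+1)t + x²(λ−1)) / ((λ−1)t + (λ+1)x). Then |h(y) − h(y+ρ)| ≤ (8 / (√λ · (y/x + 1)))² · ρ = 64ρ / (λ (y/x + 1)²). -/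
/-!
The difference of two values of a Möbius transformation is its determinant times the difference of
the arguments, divided by the product of the two denominators. Here the determinant is
`4 * l * x ^ 2` and the denominator at `t` is `(l - 1) * (t + x) + 2 * x`, which dominates
`(l - 1) * x * (t / x + 1)`. Hence the transformation contracts by `4 * l / (l - 1) ^ 2`, up to the
factors `t / x + 1`, and this constant is at most `64 / l` as soon as `l ≤ 4 * (l - 1)`.
-/

section Field

variable {K : Type*} [Field K]

/-- The denominator at `t` of the Möbius transformation `hyperbolicMobius x l`. -/
def hyperbolicMobiusDenom (x l t : K) : K :=
  (l - 1) * t + (l + 1) * x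

/-- The Möbius transformation which, for nonzero `x` and `l`, fixes `x` and `-x` and has derivative
`1 / l` at `x`: in the coordinate `w = (t - x) / (t + x)` it is `w ↦ w / l`. Its value at the
pole is `0`. -/
def hyperbolicMobius (x l t : K) : K :=
  (x * (l + 1) * t + x ^ 2 * (l - 1)) / hyperbolicMobiusDenom x l t

theorem hyperbolicMobius_sub {x l s t : K} (hs : hyperbolicMobiusDenom x l s ≠ 0)
    (ht : hyperbolicMobiusDenom x l t ≠ 0) :
    hyperbolicMobius x l s - hyperbolicMobius x l t =
      4 * l * x ^ 2 * (s - t) / (hyperbolicMobiusDenom x l s * hyperbolicMobiusDenom x l t) := by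
  rw [hyperbolicMobius, hyperbolicMobius, div_sub_div _ _ hs ht]
  congr 1
  simp only [hyperbolicMobiusDenom]
  ring

variable [LinearOrder K] [IsStrictOrderedRing K]

theorem hyperbolicMobiusDenom_pos {x l t : K} (hx : 0 < x) (hl : 1 ≤ l) (ht : -x ≤ t) :
    0 < hyperbolicMobiusDenom x l t :=
  calc
    0 < (l - 1) * (t + x) + 2 * x :=
      add_pos_of_nonneg_of_pos (mul_nonneg (by linarith) (by linarith)) (by linarith)
    _ = hyperbolicMobiusDenom x l t := by rw [hyperbolicMobiusDenom]; ring

theorem mul_div_add_one_le_hyperbolicMobiusDenom {x : K} (hx : 0 < x) (l t : K) :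
    (l - 1) * x * (t / x + 1) ≤ hyperbolicMobiusDenom x l t :=
  calc
    (l - 1) * x * (t / x + 1) = (l - 1) * (t + x) := by field_simp
    _ ≤ (l - 1) * (t + x) + 2 * x := by linarith
    _ = hyperbolicMobiusDenom x l t := by rw [hyperbolicMobiusDenom]; ring

theorem div_add_one_pos_of_neg_lt {x t : K} (hx : 0 < x) (ht : -x < t) : 0 < t / x + 1 := by
  rw [div_add_one hx.ne']
  exact div_pos (by linarith) hx

theorem abs_hyperbolicMobius_sub_le {x l s t : K} (hx : 0 < x) (hl : 1 < l)
    (hs : -x < s) (ht : -x < t) :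
    |hyperbolicMobius x l s - hyperbolicMobius x l t| ≤
      4 * l / (l - 1) ^ 2 * |s - t| / ((s / x + 1) * (t / x + 1)) := by
  have : 0 < l - 1 := sub_pos.2 hl
  have hs₀ := div_add_one_pos_of_neg_lt hx hs
  have ht₀ := div_add_one_pos_of_neg_lt hx ht
  have hDs := hyperbolicMobiusDenom_pos hx hl.le hs.le
  have hDt := hyperbolicMobiusDenom_pos hx hl.le ht.le
  have hdet : 0 ≤ 4 * l * x ^ 2 := by positivity
  calc
    |hyperbolicMobius x l s - hyperbolicMobius x l t|
      = 4 * l * x ^ 2 * |s - t| /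
          (hyperbolicMobiusDenom x l s * hyperbolicMobiusDenom x l t) := by
        rw [hyperbolicMobius_sub hDs.ne' hDt.ne', abs_div, abs_mul, abs_of_nonneg hdet,
          abs_of_pos (mul_pos hDs hDt)]
    _ ≤ 4 * l * x ^ 2 * |s - t| /
          (((l - 1) * x * (s / x + 1)) * ((l - 1) * x * (t / x + 1))) := by
        gcongr <;> exact mul_div_add_one_le_hyperbolicMobiusDenom hx l _
    _ = 4 * l / (l - 1) ^ 2 * |s - t| / ((s / x + 1) * (t / x + 1)) := by
        field_simp

theorem four_mul_div_sub_one_sq_le {l : K} (hl : 4 / 3 ≤ l) : 4 * l / (l - 1) ^ 2 ≤ 64 / l := by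
  have : 0 < l := lt_of_lt_of_le (by norm_num) hl
  have hl_le : l / 4 ≤ l - 1 := by linarith
  calc
    4 * l / (l - 1) ^ 2 ≤ 4 * l / (l / 4) ^ 2 := by gcongr
    _ = 64 / l := by field_simp; norm_num

end Field

theorem div_sqrt_mul_sq {a : ℝ} (ha : 0 ≤ a) (b c : ℝ) :
    (c / (√a * b)) ^ 2 = c ^ 2 / (a * b ^ 2) := by
  rw [div_pow, mul_pow, Real.sq_sqrt ha]

theorem mobius_contraction_case_I_general {x l y ρ : ℝ} (hx : 0 < x) (hl : 4 / 3 ≤ l)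
    (hy : -x < y) (hρ : 0 ≤ ρ) :
    |hyperbolicMobius x l y - hyperbolicMobius x l (y + ρ)| ≤
        (8 / (√l * (y / x + 1))) ^ 2 * ρ ∧
      (8 / (√l * (y / x + 1))) ^ 2 * ρ = 64 * ρ / (l * (y / x + 1) ^ 2) := by
  have hy₀ := div_add_one_pos_of_neg_lt hx hy
  have hconst : (8 / (√l * (y / x + 1))) ^ 2 * ρ = 64 * ρ / (l * (y / x + 1) ^ 2) := by
    rw [div_sqrt_mul_sq (by linarith), div_mul_eq_mul_div]
    norm_num
  refine ⟨?_, hconst⟩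
  rw [hconst]
  calc
    |hyperbolicMobius x l y - hyperbolicMobius x l (y + ρ)|
      ≤ 4 * l / (l - 1) ^ 2 * |y - (y + ρ)| / ((y / x + 1) * ((y + ρ) / x + 1)) :=
        abs_hyperbolicMobius_sub_le hx (by linarith) hy (by linarith)
    _ = 4 * l / (l - 1) ^ 2 * ρ / ((y / x + 1) * ((y + ρ) / x + 1)) := by
        rw [sub_add_cancel_left, abs_neg, abs_of_nonneg hρ]
    _ ≤ 64 / l * ρ / ((y / x + 1) * (y / x + 1)) := by
        gcongr ?_ * ρ / (_ * (?_ / x + 1))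
        · exact four_mul_div_sub_one_sq_le hl
        · exact le_add_of_nonneg_right hρ
    _ = 64 * ρ / (l * (y / x + 1) ^ 2) := by
        rw [div_mul_eq_mul_div, div_div, ← sq]

theorem mobius_contraction_case_I (x lam y ρ : ℝ)
    (hx : 0 < x) (hlam : 2 ≤ lam) (hy : 0 ≤ y) (hρ : 0 < ρ)
    (h : ℝ → ℝ)
    (hh : ∀ t : ℝ, h t = (x * (lam + 1) * t + x ^ 2 * (lam - 1)) /
        ((lam - 1) * t + (lam + 1) * x)) :
    |h y - h (y + ρ)| ≤ (8 / (Real.sqrt lam * (y / x + 1))) ^ 2 * ρ ∧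
    (8 / (Real.sqrt lam * (y / x + 1))) ^ 2 * ρ = 64 * ρ / (lam * (y / x + 1) ^ 2) := by
  obtain rfl : h = hyperbolicMobius x lam := funext hh
  exact mobius_contraction_case_I_general hx (by linarith) (by linarith) hρ.le
end

section
/- For every nonzero integer i set x_i = sign(i)·2^{i²}, and for every integer j ≥ 1 set r_j = 2^{−j−2} and λ_j = 1 + (2·x_j² + 2·x_j·√(x_j² + r_j²)) / r_j², extended by λ_{−j} = λ_j. For nonzero integers i, j with |i| ≠ |j| define μ_{i,j} = 8 / (√(λ_{|j|}) · |x_i/x_j + 1|). Then for every integer k ≥ 2, the sum of μ_{i,j}^{1/k} over all pairs (i, j) of nonzero integers with |i| ≥ k+1, |j| ≥ k+1 and |i| ≠ |j| is at most 1. -/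
/-!
The multiplier is a perfect square, `λ_j = ((x_j + √(x_j² + r_j²)) / r_j)²`, so
`√λ_j ≥ 2 x_j / r_j`. Since the `|x_i|` grow by a factor of at least two, `|x_i + x_j|` is at least
half of the larger of `|x_i|` and `|x_j|`. Together these give
`μ_{i,j} ≤ 8 r_{|j|} / max (|x_i|, |x_j|) ≤ 2 ^ (1 - |j| - M²)`, where `M = max (|i|, |j|)`.
As `M² ≥ 2kM - k²` and `2M ≥ |i| + |j| + 1`, the `k`-th root of this bound is at most
`2⁻⁴ · 2 ^ (-(|i| - k - 1)) · 2 ^ (-(|j| - k - 1))`. The sum over all pairs is then at most `2⁻⁴`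
times the square of a two-sided geometric series of sum `4`.
-/

open scoped ENNReal

lemma one_add_div_sq_eq_sq {r : ℝ} (hr : r ≠ 0) (x : ℝ) :
    1 + (2 * x ^ 2 + 2 * x * √(x ^ 2 + r ^ 2)) / r ^ 2 = ((x + √(x ^ 2 + r ^ 2)) / r) ^ 2 := by
  have hsq : √(x ^ 2 + r ^ 2) ^ 2 = x ^ 2 + r ^ 2 := Real.sq_sqrt (by positivity)
  field_simp
  linear_combination -hsq

lemma two_mul_div_le_sqrt_one_add_div_sq {x r : ℝ} (hr : 0 < r) :
    2 * x / r ≤ √(1 + (2 * x ^ 2 + 2 * x * √(x ^ 2 + r ^ 2)) / r ^ 2) := by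
  have hx : x ≤ √(x ^ 2 + r ^ 2) := Real.le_sqrt_of_sq_le (by nlinarith)
  rw [one_add_div_sq_eq_sq hr.ne']
  calc 2 * x / r ≤ (x + √(x ^ 2 + r ^ 2)) / r := by gcongr; linarith
    _ ≤ √(((x + √(x ^ 2 + r ^ 2)) / r) ^ 2) := Real.le_sqrt_of_sq_le le_rfl

lemma max_abs_le_two_mul_abs_add {R : Type*} [CommRing R] [LinearOrder R] [IsStrictOrderedRing R]
    {a b : R} (h : 2 * |a| ≤ |b| ∨ 2 * |b| ≤ |a|) : max |a| |b| ≤ 2 * |a + b| := by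
  have ha : |a| ≤ |a + b| + |b| := by simpa using abs_sub (a + b) b
  have hb : |b| ≤ |a + b| + |a| := by simpa using abs_sub (a + b) a
  have := abs_nonneg a
  have := abs_nonneg b
  rcases h with h | h <;> refine max_le ?_ ?_ <;> linarith

lemma max_abs_div_le_mul_abs_div_add_one {a b r s : ℝ} (hb : b ≠ 0) (hr : 0 < r)
    (hs : 2 * |b| / r ≤ s) (hab : 2 * |a| ≤ |b| ∨ 2 * |b| ≤ |a|) :
    max |a| |b| / r ≤ s * |a / b + 1| :=
  calc max |a| |b| / r ≤ 2 * |a + b| / r := by gcongr; exact max_abs_le_two_mul_abs_add hab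
    _ = 2 * |b| / r * |a / b + 1| := by
      rw [div_add_one hb, abs_div]
      field_simp
    _ ≤ s * |a / b + 1| := by gcongr

lemma apply_max_le_max_apply {α β : Type*} [LinearOrder α] [LinearOrder β] {f g : α → β} {a b : α}
    (ha : f a ≤ g a) (hb : f b ≤ g b) : f (max a b) ≤ max (g a) (g b) := by
  rcases max_choice a b with h | h <;> rw [h]
  exacts [le_max_of_le_left ha, le_max_of_le_right hb]

section OddSequence

variable {x : ℤ → ℝ}

lemma abs_apply_eq_apply_abs (hodd : ∀ j, 1 ≤ j → x (-j) = -x j) (hnonneg : ∀ j, 1 ≤ j → 0 ≤ x j)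
    {i : ℤ} (hi : i ≠ 0) : |x i| = x |i| := by
  rcases hi.lt_or_gt with h | h
  · rw [abs_of_neg h, ← neg_neg i, hodd (-i) (by omega), abs_neg, neg_neg i,
      abs_of_nonneg (hnonneg _ (by omega))]
  · rw [abs_of_pos h, abs_of_nonneg (hnonneg _ (by omega))]

lemma eight_div_sqrt_mul_abs_le {r : ℝ} {i j : ℤ}
    (hodd : ∀ j, 1 ≤ j → x (-j) = -x j)
    (hgrowth : ∀ j : ℤ, 1 ≤ j → (2 : ℝ) ^ (j ^ 2) ≤ x j)
    (hdouble : ∀ i j, 1 ≤ i → i < j → 2 * x i ≤ x j)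
    (hr : 0 < r) (hrle : r ≤ (2 : ℝ) ^ (-|j| - 2))
    (hi : i ≠ 0) (hj : j ≠ 0) (hij : |i| ≠ |j|) :
    8 / (√(1 + (2 * x |j| ^ 2 + 2 * x |j| * √(x |j| ^ 2 + r ^ 2)) / r ^ 2) * |x i / x j + 1|) ≤
      (2 : ℝ) ^ (1 - |j| - max |i| |j| ^ 2) := by
  have hpos (j : ℤ) (hj : 1 ≤ j) : 0 < x j := lt_of_lt_of_le (by positivity) (hgrowth j hj)
  have habs {i : ℤ} : i ≠ 0 → |x i| = x |i| :=
    abs_apply_eq_apply_abs hodd fun j hj => (hpos j hj).le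
  have hi1 : 1 ≤ |i| := Int.one_le_abs hi
  have hj1 : 1 ≤ |j| := Int.one_le_abs hj
  have hxj : x j ≠ 0 := abs_pos.mp (habs hj ▸ hpos _ hj1)
  have hsep : 2 * |x i| ≤ |x j| ∨ 2 * |x j| ≤ |x i| := by
    rw [habs hi, habs hj]
    exact hij.lt_or_gt.imp (hdouble _ _ hi1) (hdouble _ _ hj1)
  have hmax : (2 : ℝ) ^ (max |i| |j| ^ 2) ≤ max |x i| |x j| := by
    rw [habs hi, habs hj]
    exact apply_max_le_max_apply (f := fun n : ℤ => (2 : ℝ) ^ (n ^ 2))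
      (hgrowth _ hi1) (hgrowth _ hj1)
  have hsqrt := (congrArg (2 * · / r) (habs hj)).trans_le (two_mul_div_le_sqrt_one_add_div_sq hr)
  have hden := max_abs_div_le_mul_abs_div_add_one hxj hr hsqrt hsep
  calc _ ≤ 8 / ((2 : ℝ) ^ (max |i| |j| ^ 2) / (2 : ℝ) ^ (-|j| - 2)) := by
        gcongr
        exact le_trans (by gcongr) hden
    _ = (2 : ℝ) ^ (1 - |j| - max |i| |j| ^ 2) := by
        rw [show (8 : ℝ) = 2 ^ (3 : ℤ) by norm_num, ← zpow_sub₀ two_ne_zero,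
          ← zpow_sub₀ two_ne_zero]
        congr 1
        ring

end OddSequence

lemma mul_add_sub_two_mul_le_max_sq_add {a b k : ℤ} (hk : 0 ≤ k) (hb : 1 ≤ b) (hab : a ≠ b) :
    k * (a + b + 2 - 2 * k) ≤ max a b ^ 2 + b - 1 := by
  have hmax : a + b + 1 ≤ 2 * max a b := by omega
  have hkk : k ≤ k ^ 2 := Int.le_self_sq k
  calc k * (a + b + 2 - 2 * k) ≤ k * (2 * max a b + 1 - 2 * k) :=
        mul_le_mul_of_nonneg_left (by linarith) hk
    _ = 2 * max a b * k + k - 2 * k ^ 2 := by ring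
    _ ≤ max a b ^ 2 + b - 1 := by linarith [two_mul_le_add_sq (max a b) k]

lemma rpow_one_div_le_pow {a c : ℝ} {k : ℤ} {n : ℕ} (hk : 0 < k) (ha : 0 ≤ a) (hc : 0 ≤ c)
    (h : a ≤ c ^ (k * n)) : a ^ ((1 : ℝ) / k) ≤ c ^ n := by
  have hk' : (0 : ℝ) < k := by exact_mod_cast hk
  rw [one_div, Real.rpow_inv_le_iff_of_pos ha (by positivity) hk', Real.rpow_intCast]
  rwa [mul_comm, zpow_mul, zpow_natCast] at h

lemma tsum_toNat_abs_sub_le (f : ℕ → ℝ≥0∞) (m : ℤ) :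
    ∑' i : {i : ℤ | m ≤ |i|}, f (|(i : ℤ)| - m).toNat ≤ 2 * ∑' n, f n := by
  let e (i : {i : ℤ | m ≤ |i|}) : Bool × ℕ := (decide (0 < (i : ℤ)), (|(i : ℤ)| - m).toNat)
  have he : Function.Injective e := by
    rintro ⟨i, hi : m ≤ |i|⟩ ⟨j, hj : m ≤ |j|⟩ h
    simp only [e, Prod.mk.injEq, decide_eq_decide] at h
    ext
    grind
  calc _ ≤ ∑' q : Bool × ℕ, f q.2 := ENNReal.tsum_comp_le_tsum_of_injective he fun q => f q.2
    _ = 2 * ∑' n, f n := by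
      rw [ENNReal.tsum_prod (f := fun _ n => f n), tsum_bool, two_mul]

lemma tsum_mul_le_of_subset_prod {α β : Type*} {s : Set (α × β)} {t : Set α} {u : Set β}
    (h : s ⊆ t ×ˢ u) (f : α → ℝ≥0∞) (g : β → ℝ≥0∞) :
    ∑' p : s, f p.1.1 * g p.1.2 ≤ (∑' i : t, f i) * ∑' j : u, g j :=
  calc ∑' p : s, f p.1.1 * g p.1.2
      ≤ ∑' p : (t ×ˢ u : Set (α × β)), f p.1.1 * g p.1.2 :=
        ENNReal.tsum_mono_subtype (fun p : α × β => f p.1 * g p.2) h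
    _ = ∑' q : t × u, f q.1 * g q.2 :=
        ((Equiv.Set.prod t u).symm.tsum_eq fun p => f p.1.1 * g p.1.2).symm
    _ = (∑' i : t, f i) * ∑' j : u, g j := by
        rw [ENNReal.tsum_prod (f := fun (i : t) (j : u) => f i * g j)]
        simp only [ENNReal.tsum_mul_left, ENNReal.tsum_mul_right]

lemma ofReal_rpow_one_div_le_two_inv_pow_mul {y : ℝ} {k a b : ℤ} (hk : 1 ≤ k)
    (ha : k + 1 ≤ a) (hb : k + 1 ≤ b) (hab : a ≠ b) (hy : 0 ≤ y)
    (hle : y ≤ (2 : ℝ) ^ (1 - b - max a b ^ 2)) :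
    ENNReal.ofReal (y ^ ((1 : ℝ) / k)) ≤
      2⁻¹ ^ 4 * (2⁻¹ ^ (a - (k + 1)).toNat * 2⁻¹ ^ (b - (k + 1)).toNat) := by
  have hcast : ((4 + (a - (k + 1)).toNat + (b - (k + 1)).toNat : ℕ) : ℤ) = a + b + 2 - 2 * k := by
    omega
  have hpow : y ≤ (2⁻¹ : ℝ) ^ (k * (4 + (a - (k + 1)).toNat + (b - (k + 1)).toNat : ℕ)) := by
    rw [hcast, inv_zpow', ← neg_mul]
    refine hle.trans (zpow_le_zpow_right₀ one_le_two ?_)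
    linarith [mul_add_sub_two_mul_le_max_sq_add (k := k) (by omega) (by omega : 1 ≤ b) hab]
  have hroot := rpow_one_div_le_pow (by omega) hy (by norm_num) hpow
  refine (ENNReal.ofReal_le_ofReal hroot).trans_eq ?_
  rw [ENNReal.ofReal_pow (by norm_num), ENNReal.ofReal_inv_of_pos two_pos, ENNReal.ofReal_ofNat,
    pow_add, pow_add, mul_assoc]

lemma tsum_ofReal_rpow_one_div_le_one {μ : ℤ → ℤ → ℝ} {k : ℤ} (hk : 1 ≤ k)
    (hμ : ∀ i j, i ≠ 0 → j ≠ 0 → |i| ≠ |j| →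
      0 ≤ μ i j ∧ μ i j ≤ (2 : ℝ) ^ (1 - |j| - max |i| |j| ^ 2)) :
    ∑' p : {p : ℤ × ℤ // k + 1 ≤ |p.1| ∧ k + 1 ≤ |p.2| ∧ |p.1| ≠ |p.2|},
        ENNReal.ofReal (μ p.1.1 p.1.2 ^ ((1 : ℝ) / k)) ≤ 1 := by
  let w (i : ℤ) : ℝ≥0∞ := 2⁻¹ ^ (|i| - (k + 1)).toNat
  have hterm (p : {p : ℤ × ℤ // k + 1 ≤ |p.1| ∧ k + 1 ≤ |p.2| ∧ |p.1| ≠ |p.2|}) :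
      ENNReal.ofReal (μ p.1.1 p.1.2 ^ ((1 : ℝ) / k)) ≤ 2⁻¹ ^ 4 * (w p.1.1 * w p.1.2) := by
    obtain ⟨⟨i, j⟩, hi : k + 1 ≤ |i|, hj : k + 1 ≤ |j|, hij⟩ := p
    obtain ⟨hnonneg, hle⟩ := hμ i j (by grind) (by grind) hij
    exact ofReal_rpow_one_div_le_two_inv_pow_mul hk hi hj hij hnonneg hle
  have hw : ∑' i : {i : ℤ | k + 1 ≤ |i|}, w i ≤ 4 := by
    refine (tsum_toNat_abs_sub_le (2⁻¹ ^ ·) (k + 1)).trans_eq ?_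
    rw [ENNReal.tsum_geometric, ENNReal.one_sub_inv_two, inv_inv]
    norm_num
  calc _ ≤ ∑' p : {p : ℤ × ℤ | k + 1 ≤ |p.1| ∧ k + 1 ≤ |p.2| ∧ |p.1| ≠ |p.2|},
          2⁻¹ ^ 4 * (w p.1.1 * w p.1.2) := ENNReal.tsum_le_tsum hterm
    _ ≤ 2⁻¹ ^ 4 * ((∑' i : {i : ℤ | k + 1 ≤ |i|}, w i) * ∑' i : {i : ℤ | k + 1 ≤ |i|}, w i) := by
        rw [ENNReal.tsum_mul_left]
        gcongr
        exact tsum_mul_le_of_subset_prod (fun p hp => ⟨hp.1, hp.2.1⟩) w w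
    _ ≤ 2⁻¹ ^ 4 * (4 * 4) := by gcongr
    _ = 1 := by
        rw [← ENNReal.inv_pow, show (4 : ℝ≥0∞) * 4 = 2 ^ 4 by norm_num]
        exact ENNReal.inv_mul_cancel (by simp) (by simp)

theorem mu_sum_le_one_general
    (x : ℤ → ℝ) (hodd : ∀ j : ℤ, 1 ≤ j → x (-j) = -x j)
    (hgrowth : ∀ j : ℤ, 1 ≤ j → (2 : ℝ) ^ (j ^ 2) ≤ x j)
    (hdouble : ∀ i j : ℤ, 1 ≤ i → i < j → 2 * x i ≤ x j)
    (r : ℤ → ℝ) (hr : ∀ j : ℤ, 1 ≤ j → 0 < r j ∧ r j ≤ (2 : ℝ) ^ (-j - 2))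
    (lam : ℤ → ℝ)
    (hlam : ∀ j : ℤ, 1 ≤ j →
      lam j = 1 + (2 * (x j) ^ 2 + 2 * x j * √((x j) ^ 2 + (r j) ^ 2)) / (r j) ^ 2)
    (μ : ℤ → ℤ → ℝ)
    (hμ : ∀ i j : ℤ, i ≠ 0 → j ≠ 0 → |i| ≠ |j| → μ i j = 8 / (√(lam |j|) * |x i / x j + 1|))
    (k : ℤ) (hk : 1 ≤ k) :
    ∑' p : {p : ℤ × ℤ // k + 1 ≤ |p.1| ∧ k + 1 ≤ |p.2| ∧ |p.1| ≠ |p.2|},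
        ENNReal.ofReal (μ p.1.1 p.1.2 ^ ((1 : ℝ) / (k : ℝ))) ≤ 1 := by
  refine tsum_ofReal_rpow_one_div_le_one hk fun i j hi hj hij => ?_
  have hj1 : 1 ≤ |j| := Int.one_le_abs hj
  obtain ⟨hrpos, hrle⟩ := hr |j| hj1
  rw [hμ i j hi hj hij, hlam |j| hj1]
  exact ⟨by positivity,
    eight_div_sqrt_mul_abs_le hodd hgrowth hdouble hrpos hrle hi hj hij⟩

lemma two_mul_two_zpow_sq_le {i j : ℤ} (hi : 0 ≤ i) (hij : i < j) :
    2 * (2 : ℝ) ^ (i ^ 2) ≤ 2 ^ (j ^ 2) := by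
  rw [← zpow_one_add₀ two_ne_zero]
  exact zpow_le_zpow_right₀ one_le_two (by nlinarith)

theorem mu_sum_le_one
    (x : ℤ → ℝ) (hx : ∀ i : ℤ, i ≠ 0 → x i = (if 0 < i then (1:ℝ) else -1) * (2:ℝ) ^ (i ^ 2))
    (r : ℤ → ℝ) (hr : ∀ j : ℤ, 1 ≤ j → r j = (2:ℝ) ^ (-j - 2))
    (lam : ℤ → ℝ)
    (hlam : ∀ j : ℤ, 1 ≤ j →
      lam j = 1 + (2 * (x j) ^ 2 + 2 * x j * Real.sqrt ((x j) ^ 2 + (r j) ^ 2)) / (r j) ^ 2)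
    (hlamneg : ∀ j : ℤ, 1 ≤ j → lam (-j) = lam j)
    (μ : ℤ → ℤ → ℝ)
    (hμ : ∀ i j : ℤ, i ≠ 0 → j ≠ 0 → |i| ≠ |j| →
      μ i j = 8 / (Real.sqrt (lam |j|) * |x i / x j + 1|))
    (k : ℤ) (hk : 2 ≤ k) :
    ∑' p : {p : ℤ × ℤ // k + 1 ≤ |p.1| ∧ k + 1 ≤ |p.2| ∧ |p.1| ≠ |p.2|},
        ENNReal.ofReal (μ p.1.1 p.1.2 ^ ((1 : ℝ) / (k : ℝ))) ≤ 1 := by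
  have hpos (j : ℤ) (hj : 1 ≤ j) : x j = 2 ^ (j ^ 2) := by
    rw [hx j (by omega), if_pos (by omega), one_mul]
  have hodd (j : ℤ) (hj : 1 ≤ j) : x (-j) = -x j := by
    rw [hpos j hj, hx (-j) (by omega), if_neg (by omega), neg_sq, neg_one_mul]
  have hdouble (i j : ℤ) (hi : 1 ≤ i) (hij : i < j) : 2 * x i ≤ x j := by
    rw [hpos i hi, hpos j (by omega)]
    exact two_mul_two_zpow_sq_le (by omega) hij
  have hr' (j : ℤ) (hj : 1 ≤ j) : 0 < r j ∧ r j ≤ 2 ^ (-j - 2) :=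
    ⟨hr j hj ▸ by positivity, (hr j hj).le⟩
  exact mu_sum_le_one_general x hodd (fun j hj => (hpos j hj).ge) hdouble r hr' lam hlam μ hμ k
    (by omega)
end

section
/- For all integers k ≥ 2 and i ≥ k+1, the series ∑_{j=i+1}^{∞} (2^{i²} + 2^{j²})^{−1/k} converges and its sum is at most (1/3) · 2^{−i²/k}. -/
/-!
Write `j = i + m`. When `k ≤ i` we have `j² - i² = 2im + m² ≥ 2km`, so passing from `i²` to `j²`
costs a factor of at least `b ^ (2m)` after taking `k`-th roots. The series is therefore dominated
by a geometric series of ratio `b⁻²`, whose sum over `m ≥ 1` is `1 / (b² - 1)`.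
-/

/-- The enumeration `n ↦ i + 1 + n` of the integers greater than `i`, used to transfer series
indexed by `ℕ` to series indexed by these integers. -/
def natEquivIntGt (i : ℤ) : ℕ ≃ {j : ℤ // i < j} where
  toFun n := ⟨i + 1 + n, by lia⟩
  invFun j := (j - i - 1).toNat
  left_inv n := by lia
  right_inv j := Subtype.ext (by have := j.2; lia)

theorem hasSum_geometric_int_gt {K : Type*} [NormedDivisionRing K] {r : K} (hr : ‖r‖ < 1)
    (i : ℤ) : HasSum (fun j : {j : ℤ // i < j} ↦ r ^ ((j : ℤ) - i)) (r * (1 - r)⁻¹) := by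
  have hterm (n : ℕ) : r ^ ((natEquivIntGt i n : ℤ) - i) = r * r ^ n := by
    have hexp : (natEquivIntGt i n : ℤ) - i = (n + 1 : ℕ) := by
      simp only [natEquivIntGt, Equiv.coe_fn_mk]
      lia
    rw [hexp, zpow_natCast, pow_succ']
  rw [← (natEquivIntGt i).hasSum_iff]
  simpa only [Function.comp_def, hterm] using (hasSum_geometric_of_norm_lt_one hr).mul_left r

theorem two_mul_mul_sub_le_sq_sub_sq {R : Type*} [CommRing R] [LinearOrder R]
    [IsStrictOrderedRing R] {c x y : R} (hcx : c ≤ x) (hxy : x ≤ y) :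
    2 * c * (y - x) ≤ y ^ 2 - x ^ 2 :=
  calc 2 * c * (y - x) ≤ (x + y) * (y - x) :=
        mul_le_mul_of_nonneg_right (by linarith) (sub_nonneg.mpr hxy)
    _ = y ^ 2 - x ^ 2 := by ring

section TermBound

variable {b k : ℝ} {i j : ℤ}

theorem zpow_sq_rpow_neg_one_div_le (hb : 1 ≤ b) (hk : 0 < k) (hki : k ≤ i) (hij : i ≤ j) :
    (b ^ (j ^ 2)) ^ (-(1 : ℝ) / k) ≤ b ^ (-((i : ℝ) ^ 2) / k) * (b ^ 2)⁻¹ ^ (j - i) := by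
  have hb₀ : 0 < b := one_pos.trans_le hb
  have hgap : 2 * k * ((j : ℝ) - i) ≤ (j : ℝ) ^ 2 - (i : ℝ) ^ 2 :=
    two_mul_mul_sub_le_sq_sub_sq hki (Int.cast_le.mpr hij)
  have hexp : (j : ℝ) ^ 2 * (-1 / k) ≤ -((i : ℝ) ^ 2) / k + -2 * ((j : ℝ) - i) := by
    field_simp
    linarith
  calc (b ^ (j ^ 2)) ^ (-(1 : ℝ) / k) = b ^ ((j : ℝ) ^ 2 * (-1 / k)) := by
        rw [Real.rpow_mul hb₀.le, ← Real.rpow_intCast, Int.cast_pow]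
    _ ≤ b ^ (-((i : ℝ) ^ 2) / k + -2 * ((j : ℝ) - i)) :=
        Real.rpow_le_rpow_of_exponent_le hb hexp
    _ = b ^ (-((i : ℝ) ^ 2) / k) * (b ^ 2)⁻¹ ^ (j - i) := by
        rw [Real.rpow_add hb₀, Real.rpow_mul hb₀.le, Real.rpow_neg hb₀.le, Real.rpow_two,
          ← Int.cast_sub, Real.rpow_intCast]

theorem zpow_sq_add_zpow_sq_rpow_le (hb : 1 ≤ b) (hk : 0 < k) (hki : k ≤ i) (hij : i ≤ j) :
    (b ^ (i ^ 2) + b ^ (j ^ 2)) ^ (-(1 : ℝ) / k) ≤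
      b ^ (-((i : ℝ) ^ 2) / k) * (b ^ 2)⁻¹ ^ (j - i) := by
  have hpow (n : ℤ) : 0 < b ^ n := zpow_pos (one_pos.trans_le hb) n
  have hdrop : b ^ (j ^ 2) ≤ b ^ (i ^ 2) + b ^ (j ^ 2) := le_add_of_nonneg_left (hpow _).le
  have hneg : -(1 : ℝ) / k ≤ 0 := div_nonpos_of_nonpos_of_nonneg (by norm_num) hk.le
  exact (Real.rpow_le_rpow_of_nonpos (hpow _) hdrop hneg).trans
    (zpow_sq_rpow_neg_one_div_le hb hk hki hij)

end TermBound

theorem case_I_tail_estimate_general {b k : ℝ} {i : ℤ} (hb : 1 < b) (hk : 0 < k) (hki : k ≤ i) :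
    Summable (fun j : {j : ℤ // i < j} ↦
      (b ^ (i ^ 2) + b ^ ((j : ℤ) ^ 2)) ^ (-(1 : ℝ) / k)) ∧
    ∑' j : {j : ℤ // i < j}, (b ^ (i ^ 2) + b ^ ((j : ℤ) ^ 2)) ^ (-(1 : ℝ) / k) ≤
      1 / (b ^ 2 - 1) * b ^ (-((i : ℝ) ^ 2) / k) := by
  have hpow (n : ℤ) : 0 < b ^ n := zpow_pos (one_pos.trans hb) n
  have hb₂ : 1 < b ^ 2 := one_lt_pow₀ hb two_ne_zero
  have hratio : ‖(b ^ 2)⁻¹‖ < 1 := by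
    simpa only [norm_inv, norm_pow, Real.norm_eq_abs, sq_abs] using inv_lt_one_of_one_lt₀ hb₂
  have hgeom := (hasSum_geometric_int_gt hratio i).mul_left (b ^ (-((i : ℝ) ^ 2) / k))
  have hle (j : {j : ℤ // i < j}) := zpow_sq_add_zpow_sq_rpow_le hb.le hk hki j.2.le
  have hsum : Summable (fun j : {j : ℤ // i < j} ↦
      (b ^ (i ^ 2) + b ^ ((j : ℤ) ^ 2)) ^ (-(1 : ℝ) / k)) :=
    hgeom.summable.of_nonneg_of_le (fun j ↦ Real.rpow_nonneg (add_pos (hpow _) (hpow _)).le _) hle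
  have hvalue : (b ^ 2)⁻¹ * (1 - (b ^ 2)⁻¹)⁻¹ = 1 / (b ^ 2 - 1) := by
    rw [← mul_inv, mul_one_sub, mul_inv_cancel₀ (one_pos.trans hb₂).ne', one_div]
  refine ⟨hsum, (hsum.tsum_le_tsum hle hgeom.summable).trans_eq ?_⟩
  rw [hgeom.tsum_eq, hvalue, mul_comm]

theorem case_I_tail_estimate (k i : ℤ) (hk : 2 ≤ k) (hi : k + 1 ≤ i) :
    Summable (fun j : {j : ℤ // i < j} =>
      ((2:ℝ) ^ (i ^ 2) + (2:ℝ) ^ ((j : ℤ) ^ 2)) ^ (-(1 : ℝ) / (k : ℝ))) ∧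
    ∑' j : {j : ℤ // i < j},
        ((2:ℝ) ^ (i ^ 2) + (2:ℝ) ^ ((j : ℤ) ^ 2)) ^ (-(1 : ℝ) / (k : ℝ))
      ≤ (1 / 3) * (2:ℝ) ^ (-((i : ℝ) ^ 2) / (k : ℝ)) := by
  have hthree : (2 : ℝ) ^ 2 - 1 = 3 := by norm_num
  simpa only [hthree] using case_I_tail_estimate_general (k := k) (i := i) one_lt_two
    (by exact_mod_cast (by lia : 0 < k)) (by exact_mod_cast (by lia : k ≤ i))
end

section
/- For each integer j ≥ 1 set x_j = 2^{j²}, r_j = 2^{−j−2}, λ_j = 1 + (2x_j² + 2x_j√(x_j² + r_j²))/r_j², and let M_j ∈ SL(2, ℝ) be the matrix (1/(2·x_j·√λ_j)) · [[x_j(λ_j+1), x_j²(λ_j−1)], [λ_j−1, x_j(λ_j+1)]]. For an integer k ≥ 2, let Γ_k be the subgroup of SL(2, ℝ) generated by {M_j : j ≥ k}, acting on the upper half-plane by Möbius transformations. Then the set of points w ∈ ℂ that are cluster points of the orbit {γ · i : γ ∈ Γ_k} (the orbit of the point i of the upper half-plane, viewed as a subset of ℂ) has Hausdorff dimension at most 1/(2k).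 -/
open scoped MatrixGroups UpperHalfPlane

/-!
Put `C = √(x² + r²)`. The hyperbolic generator with parameters `x`, `r` is `z ↦ C - r² / (z + C)`:
it maps the exterior of the disc of centre `-C` and radius `r` onto the disc of centre `C` and
radius `r`. The discs are pairwise disjoint and locally finite, so the cluster points of the orbit
are divided among the discs according to the first letter `s` of a reduced word. The part `L s` is,
up to the centre of its disc, contained in the union of the images `g s '' L t` over the letters
`t ≠ s⁻¹`, and on these sets `g s` contracts by a factor `κ s`. For the Hausdorff content this gives
`S ≤ (∑ κ s ^ α) * S`, where `S` is the total content of the `L s`. As `S < ∞` and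
`∑ κ s ^ α < 1`, the content vanishes, and with it the `α`-dimensional Hausdorff measure.
-/

open MeasureTheory Metric Set Filter Topology
open scoped NNReal ENNReal

section HausdorffContent

variable {X Y : Type*} [PseudoEMetricSpace X] [PseudoEMetricSpace Y] {α : ℝ}

/-- The `α`-dimensional Hausdorff content: the infimum of `∑ (diam Uₙ) ^ α` over all countable
covers `(Uₙ)`, with no restriction on the diameters. -/
noncomputable def hausdorffContent (X : Type*) [PseudoEMetricSpace X] (α : ℝ) : OuterMeasure X :=
  OuterMeasure.boundedBy fun s => ediam s ^ α

theorem hausdorffContent_le_ediam_rpow (s : Set X) : hausdorffContent X α s ≤ ediam s ^ α :=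
  OuterMeasure.boundedBy_le s

theorem hausdorffContent_countable (hα : 0 < α) {s : Set X} (hs : s.Countable) :
    hausdorffContent X α s = 0 := by
  rw [← biUnion_of_singleton s, measure_biUnion_null_iff hs]
  intro x _
  simpa [hα] using hausdorffContent_le_ediam_rpow (α := α) {x}

theorem hausdorffContent_image_le {K : ℝ≥0} {f : X → Y} {s : Set X} (hf : LipschitzOnWith K f s)
    (hα : 0 ≤ α) : hausdorffContent Y α (f '' s) ≤ (K : ℝ≥0∞) ^ α * hausdorffContent X α s := by
  have key : ((hausdorffContent Y α).comap f).restrict s ≤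
      (K : ℝ≥0∞) ^ α • hausdorffContent X α := by
    rw [hausdorffContent.eq_def X,
      OuterMeasure.smul_boundedBy (ENNReal.rpow_ne_top_of_nonneg hα ENNReal.coe_ne_top),
      OuterMeasure.le_boundedBy]
    intro t
    have hdiam : ediam (f '' (t ∩ s)) ≤ K * ediam t :=
      ediam_image_le_iff.2 fun x hx y hy =>
        (hf hx.2 hy.2).trans (by gcongr; exact edist_le_ediam_of_mem hx.1 hy.1)
    rw [OuterMeasure.restrict_apply, OuterMeasure.comap_apply]
    calc hausdorffContent Y α (f '' (t ∩ s))
        ≤ ediam (f '' (t ∩ s)) ^ α := hausdorffContent_le_ediam_rpow _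
      _ ≤ (K * ediam t) ^ α := by gcongr
      _ = (K : ℝ≥0∞) ^ α * ediam t ^ α := ENNReal.mul_rpow_of_nonneg _ _ hα
  simpa using key s

end HausdorffContent

section HausdorffMeasure

variable {X : Type*} [EMetricSpace X] [MeasurableSpace X] [BorelSpace X] {α : ℝ}

theorem hausdorffMeasure_eq_zero_of_hausdorffContent_eq_zero (hα : 0 < α) {s : Set X}
    (hs : hausdorffContent X α s = 0) : μH[α] s = 0 := by
  rw [Measure.hausdorffMeasure_apply, ← nonpos_iff_eq_zero]
  refine iSup₂_le fun r hr => le_of_forall_pos_le_add fun ε hε => ?_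
  -- A cover of total cost below `r ^ α` consists of sets of diameter at most `r`.
  have hlt : hausdorffContent X α s < min ε (r ^ α) := by
    rw [hs]
    exact lt_min hε (ENNReal.rpow_pos_of_nonneg hr hα.le)
  rw [hausdorffContent, OuterMeasure.boundedBy_apply] at hlt
  simp only [iInf_lt_iff] at hlt
  obtain ⟨t, hst, ht⟩ := hlt
  have hdiam : ∀ n, ediam (t n) ≤ r := by
    intro n
    rcases (t n).eq_empty_or_nonempty with hn | hn
    · simp [hn]
    · refine (ENNReal.rpow_le_rpow_iff hα).1 (le_trans ?_ (ht.trans_le (min_le_right _ _)).le)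
      simpa [hn] using ENNReal.le_tsum (f := fun n => ⨆ _ : (t n).Nonempty, ediam (t n) ^ α) n
  rw [zero_add]
  exact (iInf₂_le_of_le t hst (iInf_le _ hdiam)).trans (ht.trans_le (min_le_left _ _)).le

theorem hausdorffMeasure_iUnion_eq_zero_of_graphDirected {ι : Type*} [Countable ι]
    {L C : ι → Set X} {R : ι → Set ι} {g : ι → X → X} {κ : ι → ℝ≥0} (hα : 0 < α)
    (hC : ∀ s, (C s).Countable)
    (hL : ∀ s, L s ⊆ C s ∪ ⋃ t ∈ R s, g s '' L t)
    (hg : ∀ s, ∀ t ∈ R s, LipschitzOnWith (κ s) (g s) (L t))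
    (hκ : ∑' s, (κ s : ℝ≥0∞) ^ α < 1) (hdiam : ∑' s, ediam (L s) ^ α ≠ ∞) :
    μH[α] (⋃ s, L s) = 0 := by
  apply hausdorffMeasure_eq_zero_of_hausdorffContent_eq_zero hα
  set μ := hausdorffContent X α
  have hstep : ∀ s, μ (L s) ≤ (κ s : ℝ≥0∞) ^ α * ∑' t, μ (L t) := fun s =>
    calc μ (L s) ≤ μ (C s) + μ (⋃ t ∈ R s, g s '' L t) :=
          (measure_mono (hL s)).trans (measure_union_le _ _)
      _ = μ (⋃ t ∈ R s, g s '' L t) := by rw [hausdorffContent_countable hα (hC s), zero_add]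
      _ ≤ ∑' t : R s, μ (g s '' L t) := measure_biUnion_le μ (to_countable _) _
      _ ≤ ∑' t : R s, (κ s : ℝ≥0∞) ^ α * μ (L t) :=
          ENNReal.tsum_le_tsum fun t => hausdorffContent_image_le (hg s t t.2) hα.le
      _ ≤ ∑' t, (κ s : ℝ≥0∞) ^ α * μ (L t) :=
          ENNReal.tsum_comp_le_tsum_of_injective Subtype.val_injective _
      _ = (κ s : ℝ≥0∞) ^ α * ∑' t, μ (L t) := ENNReal.tsum_mul_left
  have hfin : ∑' s, μ (L s) ≠ ∞ :=
    ne_top_of_le_ne_top hdiam (ENNReal.tsum_le_tsum fun s => hausdorffContent_le_ediam_rpow _)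
  have hle : ∑' s, μ (L s) ≤ (∑' s, (κ s : ℝ≥0∞) ^ α) * ∑' s, μ (L s) :=
    (ENNReal.tsum_le_tsum hstep).trans_eq ENNReal.tsum_mul_right
  have hzero : ∑' s, μ (L s) = 0 := by
    by_contra hne
    exact hle.not_gt (by simpa using ENNReal.mul_lt_mul_left hne hfin hκ)
  exact nonpos_iff_eq_zero.1 ((measure_iUnion_le L).trans_eq hzero)

end HausdorffMeasure

theorem derivedSet_iUnion_subset_of_locallyFinite {X ι : Type*} [TopologicalSpace X]
    {f : ι → Set X} (hf : LocallyFinite f) : derivedSet (⋃ i, f i) ⊆ ⋃ i, derivedSet (f i) := by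
  intro x hx
  simp only [mem_iUnion, mem_derivedSet, accPt_principal_iff_clusterPt,
    ← mem_closure_iff_clusterPt] at hx ⊢
  rwa [iUnion_sdiff, (hf.subset fun i => sdiff_subset).closure_iUnion, mem_iUnion] at hx

theorem derivedSet_insert_subset {X : Type*} [TopologicalSpace X] [T1Space X] (a : X) (s : Set X) :
    derivedSet (insert a s) ⊆ derivedSet s := by
  rw [insert_eq, derivedSet_union]
  refine union_subset (fun x hx => ?_) subset_rfl
  exact absurd (finite_singleton a) (Set.Infinite.of_accPt hx)

theorem tsum_prod_bool {ι : Type*} (f : ι → ℝ≥0∞) : ∑' s : ι × Bool, f s.1 = 2 * ∑' i, f i := by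
  simp only [ENNReal.tsum_prod', tsum_bool, ← two_mul, ENNReal.tsum_mul_left]

/-- The Möbius transformation `z ↦ c - r ^ 2 / (z + c)`, which maps the exterior of the disc of
centre `-c` and radius `r` onto the disc of centre `c` and radius `r`. Since `x / 0 = 0` it sends
its pole `-c` to `c`, which makes it a bijection of `ℂ`. -/
noncomputable def discPairing (c : ℂ) (r : ℝ) (z : ℂ) : ℂ :=
  c - r ^ 2 / (z + c)

section DiscPairing

variable {c z : ℂ} {r d : ℝ}

theorem discPairing_neg_leftInverse (hr : r ≠ 0) :
    Function.LeftInverse (discPairing (-c) r) (discPairing c r) := by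
  intro z
  have hr' : (r : ℂ) ^ 2 ≠ 0 := pow_ne_zero 2 (Complex.ofReal_ne_zero.2 hr)
  have hsub : c - r ^ 2 / (z + c) + -c = -(r ^ 2 / (z + c)) := by ring
  rw [discPairing, discPairing, hsub, div_neg, div_div_cancel₀ hr']
  ring

theorem continuousAt_discPairing (hz : z ≠ -c) : ContinuousAt (discPairing c r) z := by
  have hz' : z + c ≠ 0 := by rwa [← sub_neg_eq_add, sub_ne_zero]
  unfold discPairing
  fun_prop (disch := exact hz')

theorem discPairing_mem_closedBall (hr : 0 < r) (hz : r ≤ ‖z + c‖) :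
    discPairing c r z ∈ closedBall c r := by
  have hsub : discPairing c r z - c = -((r : ℂ) ^ 2 / (z + c)) := by
    rw [discPairing]
    ring
  rw [mem_closedBall_iff_norm, hsub, norm_neg, norm_div, norm_pow, Complex.norm_of_nonneg hr.le,
    div_le_iff₀ (hr.trans_le hz), sq]
  gcongr

theorem lipschitzOnWith_discPairing (hd : 0 < d) :
    LipschitzOnWith ((r / d) ^ 2).toNNReal (discPairing c r) {z | d ≤ ‖z + c‖} := by
  refine LipschitzOnWith.of_dist_le_mul fun z (hz : d ≤ ‖z + c‖) w (hw : d ≤ ‖w + c‖) => ?_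
  have hz' : z + c ≠ 0 := norm_pos_iff.1 (hd.trans_le hz)
  have hw' : w + c ≠ 0 := norm_pos_iff.1 (hd.trans_le hw)
  have hsub : discPairing c r z - discPairing c r w =
      (r : ℂ) ^ 2 / ((z + c) * (w + c)) * (z - w) := by
    unfold discPairing
    field_simp
    ring
  rw [dist_eq_norm, dist_eq_norm, hsub, norm_mul, Real.coe_toNNReal _ (sq_nonneg _)]
  gcongr
  rw [norm_div, norm_mul, norm_pow, Complex.norm_real, Real.norm_eq_abs, sq_abs, div_pow, sq d]
  gcongr

theorem coe_inv_smul_eq_discPairing {G : Type*} [Group G] [MulAction G ℍ] {g : G} (hr : r ≠ 0)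
    (hg : ∀ z : ℍ, ((g • z : ℍ) : ℂ) = discPairing c r z) (z : ℍ) :
    ((g⁻¹ • z : ℍ) : ℂ) = discPairing (-c) r z := by
  have h := hg (g⁻¹ • z)
  rw [smul_inv_smul] at h
  rw [h, discPairing_neg_leftInverse hr]

theorem coe_smul_eq_discPairing_of_matrix_eq {A : SL(2, ℝ)} {μ c : ℝ}
    (hA : (A : Matrix (Fin 2) (Fin 2) ℝ) = μ • !![c, c ^ 2 - r ^ 2; 1, c]) (z : ℍ) :
    ((A • z : ℍ) : ℂ) = discPairing c r z := by
  have hμ : (μ : ℂ) ≠ 0 := by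
    intro hμ
    have hdet := A.det_coe
    rw [hA, Complex.ofReal_eq_zero.1 hμ] at hdet
    simp at hdet
  have hpole : (z : ℂ) + c ≠ 0 := by
    intro h
    simpa using z.im_pos.ne' (by simpa using congrArg Complex.im h)
  have hentry : ∀ i j, A i j = (μ • !![c, c ^ 2 - r ^ 2; 1, c]) i j := fun i j => by rw [← hA]
  rw [UpperHalfPlane.coe_specialLinearGroup_apply]
  simp only [discPairing, hentry, Algebra.algebraMap_self, Real.ringHom_apply, Matrix.smul_apply,
    Matrix.of_apply, Matrix.cons_val', Matrix.cons_val_zero, Matrix.cons_val_one,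
    Matrix.cons_val_fin_one, smul_eq_mul, Complex.ofReal_mul, Complex.ofReal_sub,
    Complex.ofReal_pow, mul_one]
  field_simp
  ring

end DiscPairing

theorem hyperbolic_matrix_eq_smul {x r lam : ℝ} (hr : r ≠ 0)
    (hlam : lam = 1 + (2 * x ^ 2 + 2 * x * √(x ^ 2 + r ^ 2)) / r ^ 2) :
    !![x * (lam + 1), x ^ 2 * (lam - 1); lam - 1, x * (lam + 1)] =
      (lam - 1) • !![√(x ^ 2 + r ^ 2), √(x ^ 2 + r ^ 2) ^ 2 - r ^ 2; 1, √(x ^ 2 + r ^ 2)] := by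
  have hsq : √(x ^ 2 + r ^ 2) ^ 2 = x ^ 2 + r ^ 2 := Real.sq_sqrt (by positivity)
  set C := √(x ^ 2 + r ^ 2)
  have hmul : (lam - 1) * r ^ 2 = 2 * x ^ 2 + 2 * x * C := by
    rw [hlam, add_sub_cancel_left, div_mul_cancel₀ _ (pow_ne_zero 2 hr)]
  have hdiag : x * (lam + 1) = (lam - 1) * C :=
    mul_right_cancel₀ (pow_ne_zero 2 hr) (by linear_combination (x - C) * hmul - 2 * x * hsq)
  rw [hdiag, hsq, add_sub_cancel_right, mul_comm (x ^ 2)]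
  simp

/-- The inverse of a letter of the free group on `ι`, letters being encoded as in `FreeGroup`: the
pair `(i, true)` is the generator `i` and `(i, false)` is its inverse. -/
def letterInv {ι : Type*} (s : ι × Bool) : ι × Bool :=
  (s.1, !s.2)

theorem letterInv_letterInv {ι : Type*} (s : ι × Bool) : letterInv (letterInv s) = s := by
  simp [letterInv]

/-- The centre of the disc attached to a letter. -/
noncomputable def letterCenter {ι : Type*} (c : ι → ℝ) (s : ι × Bool) : ℂ :=
  if s.2 then c s.1 else -c s.1

theorem letterCenter_letterInv {ι : Type*} (c : ι → ℝ) (s : ι × Bool) :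
    letterCenter c (letterInv s) = -letterCenter c s := by
  rcases s with ⟨i, _ | _⟩ <;> simp [letterCenter, letterInv]

theorem norm_letterCenter {ι : Type*} (c : ι → ℝ) (s : ι × Bool) :
    ‖letterCenter c s‖ = |c s.1| := by
  rcases s with ⟨i, _ | _⟩ <;> simp [letterCenter]

/-- The generator attached to a letter, as a transformation of `ℂ`. -/
noncomputable def letterMap {ι : Type*} (c r : ι → ℝ) (s : ι × Bool) : ℂ → ℂ :=
  discPairing (letterCenter c s) (r s.1)

/-- `InCylinder c r p s z` says that `z` is the image of the base point `p` under a nonempty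
reduced word in the generators whose first letter is `s`. -/
inductive InCylinder {ι : Type*} (c r : ι → ℝ) (p : ℂ) : ι × Bool → ℂ → Prop
  | base (s : ι × Bool) : InCylinder c r p s (letterMap c r s p)
  | step {s t : ι × Bool} {z : ℂ} : t ≠ letterInv s → InCylinder c r p t z →
      InCylinder c r p s (letterMap c r s z)

/-- The set of points of the orbit of `p` whose reduced word starts with `s`. -/
def cylinder {ι : Type*} (c r : ι → ℝ) (p : ℂ) (s : ι × Bool) : Set ℂ :=
  {z | InCylinder c r p s z}

/-- The images of `p` under all reduced words in the generators, including the empty word. -/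
def reducedOrbit {ι : Type*} (c r : ι → ℝ) (p : ℂ) : Set ℂ :=
  insert p (⋃ s, cylinder c r p s)

/-- The discs of centres `± c i` and radii `r i` form a locally finite Schottky configuration
symmetric about the origin, in which `d i` is a lower bound for the distance from the centre of
either disc of the `i`-th pair to all the other discs. -/
structure SeparatedDiscs {ι : Type*} (c r d : ι → ℝ) : Prop where
  radius_pos : ∀ i, 0 < r i
  radius_le : ∀ i, r i ≤ d i
  le_center : ∀ i, d i ≤ c i
  separated : ∀ i j, i ≠ j → d i + r j ≤ |c i - c j|
  finite_setOf_le : ∀ R, {i | c i - r i ≤ R}.Finite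

namespace SeparatedDiscs

variable {ι : Type*} {c r d : ι → ℝ} {p : ℂ} {α : ℝ}

theorem dist_pos (h : SeparatedDiscs c r d) (i : ι) : 0 < d i :=
  (h.radius_pos i).trans_le (h.radius_le i)

theorem center_pos (h : SeparatedDiscs c r d) (i : ι) : 0 < c i :=
  (h.dist_pos i).trans_le (h.le_center i)

theorem add_le_norm_letterCenter_add (h : SeparatedDiscs c r d) {s t : ι × Bool}
    (hst : t ≠ letterInv s) : d s.1 + r t.1 ≤ ‖letterCenter c t + letterCenter c s‖ := by
  by_cases hne : s.1 = t.1
  · obtain rfl : t = s := by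
      rcases s with ⟨i, _ | _⟩ <;> rcases t with ⟨j, _ | _⟩ <;> simp_all [letterInv]
    rw [← two_mul, norm_mul, norm_letterCenter, Complex.norm_two, abs_of_pos (h.center_pos _)]
    linarith [h.radius_le t.1, h.le_center t.1]
  · calc d s.1 + r t.1 ≤ |c s.1 - c t.1| := h.separated _ _ hne
      _ = |‖letterCenter c t‖ - ‖-letterCenter c s‖| := by
          rw [norm_neg, norm_letterCenter, norm_letterCenter, abs_of_pos (h.center_pos _),
            abs_of_pos (h.center_pos _), abs_sub_comm]
      _ ≤ ‖letterCenter c t + letterCenter c s‖ := by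
          simpa using abs_norm_sub_norm_le (letterCenter c t) (-letterCenter c s)

theorem le_norm_add_letterCenter (h : SeparatedDiscs c r d) {s t : ι × Bool}
    (hst : t ≠ letterInv s) {z : ℂ} (hz : z ∈ closedBall (letterCenter c t) (r t.1)) :
    d s.1 ≤ ‖z + letterCenter c s‖ := by
  have hsplit := norm_sub_le (z + letterCenter c s) (z - letterCenter c t)
  rw [show z + letterCenter c s - (z - letterCenter c t) = letterCenter c t + letterCenter c s by
    ring] at hsplit
  linarith [h.add_le_norm_letterCenter_add hst, mem_closedBall_iff_norm.1 hz]

theorem countable (h : SeparatedDiscs c r d) : Countable ι := by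
  refine countable_univ_iff.1 ((countable_iUnion fun n : ℕ => (h.finite_setOf_le n).countable).mono
    fun i _ => ?_)
  exact mem_iUnion.2 (exists_nat_ge (c i - r i))

theorem letterMap_letterInv_letterMap (h : SeparatedDiscs c r d) (s : ι × Bool) (z : ℂ) :
    letterMap c r (letterInv s) (letterMap c r s z) = z := by
  rw [letterMap, letterMap, letterCenter_letterInv]
  exact discPairing_neg_leftInverse (h.radius_pos s.1).ne' z

theorem letterMap_letterMap_letterInv (h : SeparatedDiscs c r d) (s : ι × Bool) (z : ℂ) :
    letterMap c r s (letterMap c r (letterInv s) z) = z := by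
  simpa only [letterInv_letterInv] using h.letterMap_letterInv_letterMap (letterInv s) z

theorem letterMap_mem_closedBall (h : SeparatedDiscs c r d) {s : ι × Bool} {z : ℂ}
    (hz : d s.1 ≤ ‖z + letterCenter c s‖) :
    letterMap c r s z ∈ closedBall (letterCenter c s) (r s.1) :=
  discPairing_mem_closedBall (h.radius_pos s.1) ((h.radius_le s.1).trans hz)

theorem cylinder_subset_closedBall (h : SeparatedDiscs c r d)
    (hp : ∀ s : ι × Bool, d s.1 ≤ ‖p + letterCenter c s‖) (s : ι × Bool) :
    cylinder c r p s ⊆ closedBall (letterCenter c s) (r s.1) := by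
  intro z (hz : InCylinder c r p s z)
  induction hz with
  | base s => exact h.letterMap_mem_closedBall (hp s)
  | step hst _ ih => exact h.letterMap_mem_closedBall (h.le_norm_add_letterCenter hst ih)

theorem derivedSet_cylinder_subset_closedBall (h : SeparatedDiscs c r d)
    (hp : ∀ s : ι × Bool, d s.1 ≤ ‖p + letterCenter c s‖) (s : ι × Bool) :
    derivedSet (cylinder c r p s) ⊆ closedBall (letterCenter c s) (r s.1) :=
  (derivedSet_subset_closure _).trans
    (closure_minimal (h.cylinder_subset_closedBall hp s) isClosed_closedBall)

theorem letterMap_letterInv_mem_of_mem_cylinder (h : SeparatedDiscs c r d) {s : ι × Bool} {z : ℂ}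
    (hz : z ∈ cylinder c r p s) :
    letterMap c r (letterInv s) z ∈ insert p (⋃ t ∈ {t | t ≠ letterInv s}, cylinder c r p t) := by
  cases hz with
  | base =>
    rw [h.letterMap_letterInv_letterMap]
    exact mem_insert _ _
  | step hst hz =>
    rw [h.letterMap_letterInv_letterMap]
    exact mem_insert_of_mem _ (mem_biUnion hst hz)

theorem letterMap_mem_reducedOrbit (h : SeparatedDiscs c r d) (s : ι × Bool) {z : ℂ}
    (hz : z ∈ reducedOrbit c r p) : letterMap c r s z ∈ reducedOrbit c r p := by
  rcases hz with rfl | hz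
  · exact mem_insert_of_mem _ (mem_iUnion_of_mem s (InCylinder.base s))
  obtain ⟨t, ht⟩ := mem_iUnion.1 hz
  by_cases hst : t = letterInv s
  · have hcancel := h.letterMap_letterInv_mem_of_mem_cylinder ht
    rw [hst, letterInv_letterInv] at hcancel
    exact insert_subset_insert (iUnion₂_subset_iUnion _ _) hcancel
  · exact mem_insert_of_mem _ (mem_iUnion_of_mem s (InCylinder.step hst ht))

theorem coe_smul_mem_reducedOrbit (h : SeparatedDiscs c r d) {G : Type*} [Group G] [MulAction G ℍ]
    {M : ι → G} (hM : ∀ i (z : ℍ), ((M i • z : ℍ) : ℂ) = discPairing (c i) (r i) z) (p : ℍ)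
    {γ : G} (hγ : γ ∈ Subgroup.closure (range M)) :
    ((γ • p : ℍ) : ℂ) ∈ reducedOrbit c r p := by
  induction hγ using Subgroup.closure_induction_left with
  | one =>
    rw [one_smul]
    exact mem_insert _ _
  | mul_left g hg γ _ ih =>
    obtain ⟨i, rfl⟩ := hg
    rw [mul_smul, hM]
    simpa [letterMap, letterCenter] using h.letterMap_mem_reducedOrbit (i, true) ih
  | inv_mul_cancel g hg γ _ ih =>
    obtain ⟨i, rfl⟩ := hg
    rw [mul_smul, coe_inv_smul_eq_discPairing (h.radius_pos i).ne' (hM i)]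
    simpa [letterMap, letterCenter] using h.letterMap_mem_reducedOrbit (i, false) ih

theorem locallyFinite_closedBall (h : SeparatedDiscs c r d) :
    LocallyFinite fun s : ι × Bool => closedBall (letterCenter c s) (r s.1) := by
  intro w
  refine ⟨ball w 1, ball_mem_nhds w one_pos,
    ((h.finite_setOf_le (‖w‖ + 1)).prod finite_univ).subset ?_⟩
  rintro s ⟨z, hzs, hzw⟩
  have hcenter : ‖letterCenter c s‖ = c s.1 := by
    rw [norm_letterCenter, abs_of_pos (h.center_pos _)]
  have hzs' := norm_sub_norm_le (letterCenter c s) z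
  have hzw' := norm_sub_norm_le z w
  rw [norm_sub_rev] at hzs'
  refine ⟨?_, mem_univ _⟩
  rw [mem_ofPred_eq]
  linarith [mem_closedBall_iff_norm.1 hzs, mem_ball_iff_norm.1 hzw]

theorem derivedSet_insert_biUnion_cylinder_subset (h : SeparatedDiscs c r d)
    (hp : ∀ s : ι × Bool, d s.1 ≤ ‖p + letterCenter c s‖) (T : Set (ι × Bool)) :
    derivedSet (insert p (⋃ t ∈ T, cylinder c r p t)) ⊆ ⋃ t ∈ T, derivedSet (cylinder c r p t) := by
  have hfin : LocallyFinite fun t : T => cylinder c r p t :=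
    (h.locallyFinite_closedBall.subset (h.cylinder_subset_closedBall hp)).comp_injective
      Subtype.val_injective
  rw [biUnion_eq_iUnion, biUnion_eq_iUnion]
  exact (derivedSet_insert_subset _ _).trans (derivedSet_iUnion_subset_of_locallyFinite hfin)

theorem derivedSet_cylinder_subset (h : SeparatedDiscs c r d)
    (hp : ∀ s : ι × Bool, d s.1 ≤ ‖p + letterCenter c s‖) (s : ι × Bool) :
    derivedSet (cylinder c r p s) ⊆ {letterCenter c s} ∪
      ⋃ t ∈ {t | t ≠ letterInv s}, letterMap c r s '' derivedSet (cylinder c r p t) := by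
  intro w hw
  rw [mem_union, mem_singleton_iff, or_iff_not_imp_left]
  intro hws
  have hcont : ContinuousAt (letterMap c r (letterInv s)) w :=
    continuousAt_discPairing (by rwa [letterCenter_letterInv, neg_neg])
  have hinj : Function.Injective (letterMap c r (letterInv s)) :=
    Function.LeftInverse.injective (h.letterMap_letterMap_letterInv s)
  have hmap : letterMap c r (letterInv s) w ∈
      derivedSet (insert p (⋃ t ∈ {t | t ≠ letterInv s}, cylinder c r p t)) :=
    (AccPt.map hw hcont hinj).mono <| by
      rw [Filter.map_principal, principal_mono, image_subset_iff]
      exact fun z hz => h.letterMap_letterInv_mem_of_mem_cylinder hz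
  obtain ⟨t, ht, hwt⟩ := mem_iUnion₂.1 (h.derivedSet_insert_biUnion_cylinder_subset hp _ hmap)
  exact mem_biUnion ht ⟨_, hwt, h.letterMap_letterMap_letterInv s w⟩

theorem lipschitzOnWith_letterMap (h : SeparatedDiscs c r d) {s t : ι × Bool}
    (hst : t ≠ letterInv s) :
    LipschitzOnWith ((r s.1 / d s.1) ^ 2).toNNReal (letterMap c r s)
      (closedBall (letterCenter c t) (r t.1)) :=
  (lipschitzOnWith_discPairing (h.dist_pos s.1)).mono fun _ hz => h.le_norm_add_letterCenter hst hz

theorem ediam_derivedSet_cylinder_le (h : SeparatedDiscs c r d)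
    (hp : ∀ s : ι × Bool, d s.1 ≤ ‖p + letterCenter c s‖) (s : ι × Bool) :
    ediam (derivedSet (cylinder c r p s)) ≤ 2 * ENNReal.ofReal (r s.1) := by
  refine (ediam_mono (h.derivedSet_cylinder_subset_closedBall hp s)).trans ?_
  rw [← closedEBall_ofReal (h.radius_pos s.1).le]
  exact ediam_closedEBall_le

theorem hausdorffMeasure_iUnion_derivedSet_cylinder (h : SeparatedDiscs c r d)
    (hp : ∀ s : ι × Bool, d s.1 ≤ ‖p + letterCenter c s‖) (hα : 0 < α)
    (hratio : 2 * ∑' i, ENNReal.ofReal ((r i / d i) ^ 2) ^ α < 1)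
    (hradius : ∑' i, ENNReal.ofReal (r i) ^ α ≠ ∞) :
    μH[α] (⋃ s, derivedSet (cylinder c r p s)) = 0 := by
  have := h.countable
  refine hausdorffMeasure_iUnion_eq_zero_of_graphDirected
    (κ := fun s => ((r s.1 / d s.1) ^ 2).toNNReal) hα (fun s => countable_singleton _)
    (h.derivedSet_cylinder_subset hp)
    (fun s t hst => (h.lipschitzOnWith_letterMap hst).mono
      (h.derivedSet_cylinder_subset_closedBall hp t)) ?_ (ne_top_of_le_ne_top ?_
      (ENNReal.tsum_le_tsum fun s =>
        ENNReal.rpow_le_rpow (h.ediam_derivedSet_cylinder_le hp s) hα.le))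
  · exact (tsum_prod_bool fun i => ENNReal.ofReal ((r i / d i) ^ 2) ^ α).trans_lt hratio
  · rw [tsum_prod_bool fun i => (2 * ENNReal.ofReal (r i)) ^ α]
    simp only [ENNReal.mul_rpow_of_nonneg _ _ hα.le, ENNReal.tsum_mul_left]
    finiteness [hα.le]

theorem dimH_derivedSet_reducedOrbit_le (h : SeparatedDiscs c r d)
    (hp : ∀ s : ι × Bool, d s.1 ≤ ‖p + letterCenter c s‖) (hα : 0 < α)
    (hratio : 2 * ∑' i, ENNReal.ofReal ((r i / d i) ^ 2) ^ α < 1)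
    (hradius : ∑' i, ENNReal.ofReal (r i) ^ α ≠ ∞) :
    dimH (derivedSet (reducedOrbit c r p)) ≤ ENNReal.ofReal α := by
  have hsub : derivedSet (reducedOrbit c r p) ⊆ ⋃ s, derivedSet (cylinder c r p s) := by
    simpa [reducedOrbit] using h.derivedSet_insert_biUnion_cylinder_subset hp univ
  refine (dimH_mono hsub).trans (dimH_le_of_hausdorffMeasure_ne_top ?_)
  rw [Real.coe_toNNReal α hα.le,
    h.hausdorffMeasure_iUnion_derivedSet_cylinder hp hα hratio hradius]
  exact ENNReal.zero_ne_top

theorem dimH_derivedSet_orbit_le (h : SeparatedDiscs c r d) {G : Type*} [Group G] [MulAction G ℍ]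
    {M : ι → G} (hM : ∀ i (z : ℍ), ((M i • z : ℍ) : ℂ) = discPairing (c i) (r i) z) {p : ℍ}
    (hp : p.re = 0) (hα : 0 < α) (hratio : 2 * ∑' i, ENNReal.ofReal ((r i / d i) ^ 2) ^ α < 1)
    (hradius : ∑' i, ENNReal.ofReal (r i) ^ α ≠ ∞) :
    dimH (derivedSet {z : ℂ | ∃ γ ∈ Subgroup.closure (range M), z = ((γ • p : ℍ) : ℂ)}) ≤
      ENNReal.ofReal α := by
  have hdist : ∀ s : ι × Bool, d s.1 ≤ ‖(p : ℂ) + letterCenter c s‖ := by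
    intro s
    calc d s.1 ≤ |c s.1| := (h.le_center s.1).trans (le_abs_self _)
      _ = |((p : ℂ) + letterCenter c s).re| := by
          rcases s with ⟨i, _ | _⟩ <;> simp [letterCenter, hp]
      _ ≤ ‖(p : ℂ) + letterCenter c s‖ := Complex.abs_re_le_norm _
  refine (dimH_mono (derivedSet_mono _ _ ?_)).trans
    (h.dimH_derivedSet_reducedOrbit_le hdist hα hratio hradius)
  rintro _ ⟨γ, hγ, rfl⟩
  exact h.coe_smul_mem_reducedOrbit hM p hγ

end SeparatedDiscs

theorem separatedDiscs_of_four_mul_le {x r : ℕ → ℝ} (hr_pos : ∀ n, 0 < r n) (hr_le : ∀ n, r n ≤ 1)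
    (hx : ∀ n, 2 ≤ x n) (hgrowth : ∀ n, 4 * x n ≤ x (n + 1)) :
    SeparatedDiscs (fun n => √(x n ^ 2 + r n ^ 2)) r fun n => x n / 2 := by
  have hle : ∀ n, x n ≤ √(x n ^ 2 + r n ^ 2) := fun n =>
    Real.le_sqrt_of_sq_le (le_add_of_nonneg_right (sq_nonneg _))
  have hge : ∀ n, √(x n ^ 2 + r n ^ 2) ≤ x n + r n := fun n =>
    Real.sqrt_le_iff.2 ⟨by linarith [hx n, hr_pos n], by nlinarith [hx n, hr_pos n]⟩
  have hmono : Monotone x := monotone_nat_of_le_succ fun n => by linarith [hgrowth n, hx n]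
  have hlt : ∀ m n, m < n → 4 * x m ≤ x n := fun m n hmn => (hgrowth m).trans (hmono hmn)
  have hlinear : ∀ n : ℕ, (n : ℝ) ≤ x n := by
    intro n
    induction n with
    | zero => simpa using zero_le_two.trans (hx 0)
    | succ n ih => push_cast; linarith [hgrowth n, hx n]
  refine ⟨hr_pos, fun n => ?_, fun n => ?_, fun m n hmn => ?_, fun R => ?_⟩
  · linarith [hr_le n, hx n]
  · linarith [hle n, hx n]
  · rcases hmn.lt_or_gt with hmn | hmn
    · refine le_abs.2 (Or.inr ?_)
      linarith [hlt m n hmn, hle n, hge m, hr_le m, hr_le n, hx m]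
    · refine le_abs.2 (Or.inl ?_)
      linarith [hlt n m hmn, hle m, hge n, hr_le n, hx n, hx m]
  · refine (finite_le_nat ⌈R + 1⌉₊).subset fun n (hn : √(x n ^ 2 + r n ^ 2) - r n ≤ R) => ?_
    have hn' : (n : ℝ) ≤ R + 1 := by linarith [hle n, hr_le n, hlinear n]
    exact_mod_cast hn'.trans (Nat.le_ceil _)

theorem ofReal_one_half_pow (n : ℕ) : ENNReal.ofReal ((1 / 2) ^ n) = 2⁻¹ ^ n := by
  rw [ENNReal.ofReal_pow (by norm_num), one_div, ENNReal.ofReal_inv_of_pos two_pos,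
    ENNReal.ofReal_ofNat]

theorem two_mul_tsum_one_half_pow_rpow_lt_one {k : ℕ} (hk : 1 ≤ k) :
    2 * ∑' n : ℕ, ENNReal.ofReal ((1 / 2) ^ (2 * ((n + k) ^ 2 + (n + k) + 1))) ^
      (1 / (2 * k) : ℝ) < 1 := by
  have hterm : ∀ n : ℕ, ENNReal.ofReal ((1 / 2) ^ (2 * ((n + k) ^ 2 + (n + k) + 1))) ^
      (1 / (2 * k) : ℝ) ≤ 2⁻¹ ^ 3 * 2⁻¹ ^ n := by
    intro n
    have hexp : (3 + n) * (2 * k) ≤ 2 * ((n + k) ^ 2 + (n + k) + 1) := by nlinarith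
    calc ENNReal.ofReal ((1 / 2) ^ (2 * ((n + k) ^ 2 + (n + k) + 1))) ^ (1 / (2 * k) : ℝ)
        ≤ ((2⁻¹ ^ (3 + n)) ^ (2 * k)) ^ (1 / (2 * k) : ℝ) := by
          rw [ofReal_one_half_pow, ← pow_mul]
          exact ENNReal.rpow_le_rpow
            (pow_le_pow_of_le_one zero_le (ENNReal.inv_le_one.2 one_le_two) hexp) (by positivity)
      _ = 2⁻¹ ^ 3 * 2⁻¹ ^ n := by
          rw [← pow_add]
          simpa using ENNReal.pow_rpow_inv_natCast (n := 2 * k) (by lia) (2⁻¹ ^ (3 + n))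
  calc 2 * ∑' n : ℕ, ENNReal.ofReal ((1 / 2) ^ (2 * ((n + k) ^ 2 + (n + k) + 1))) ^
        (1 / (2 * k) : ℝ)
      ≤ 2 * ∑' n : ℕ, 2⁻¹ ^ 3 * 2⁻¹ ^ n := by gcongr with n; exact hterm n
    _ = 2⁻¹ := by
        rw [ENNReal.tsum_mul_left, ENNReal.tsum_geometric_two]
        have hcancel : (2 : ℝ≥0∞) * 2⁻¹ = 1 :=
          ENNReal.mul_inv_cancel two_ne_zero ENNReal.ofNat_ne_top
        rw [show (2 : ℝ≥0∞) * (2⁻¹ ^ 3 * 2) = 2 * 2⁻¹ * (2 * 2⁻¹) * 2⁻¹ by ring, hcancel,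
          one_mul, one_mul]
    _ < 1 := ENNReal.one_half_lt_one

theorem tsum_one_half_pow_rpow_ne_top (m : ℕ) {α : ℝ} (hα : 0 < α) :
    ∑' n : ℕ, ENNReal.ofReal ((1 / 2) ^ (n + m)) ^ α ≠ ∞ := by
  have hterm : ∀ n : ℕ, ENNReal.ofReal ((1 / 2) ^ (n + m)) ^ α =
      (2⁻¹ ^ α) ^ n * (2⁻¹ ^ α) ^ m := by
    intro n
    rw [ofReal_one_half_pow, ← pow_add, ← ENNReal.rpow_natCast_mul, ← ENNReal.rpow_mul_natCast,
      mul_comm]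
  have hbase : (2⁻¹ : ℝ≥0∞) ^ α < 1 := ENNReal.rpow_lt_one ENNReal.one_half_lt_one hα
  simp only [hterm, ENNReal.tsum_mul_right]
  exact ENNReal.mul_ne_top (tsum_geometric_lt_top.2 hbase).ne
    (ENNReal.pow_ne_top hbase.ne_top)

theorem two_zpow_neg_sub_two (j : ℕ) : (2 : ℝ) ^ (-(j : ℤ) - 2) = (1 / 2) ^ (j + 2) := by
  rw [one_div, inv_pow, ← zpow_natCast, ← zpow_neg, Nat.cast_add, neg_add, Nat.cast_ofNat,
    sub_eq_add_neg]

theorem one_half_pow_div_two_pow_half_sq (j : ℕ) :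
    ((1 / 2 : ℝ) ^ (j + 2) / (2 ^ j ^ 2 / 2)) ^ 2 = (1 / 2) ^ (2 * (j ^ 2 + j + 1)) := by
  rw [mul_comm, pow_mul]
  congr 1
  rw [one_div_pow, one_div_pow]
  field_simp
  ring

theorem separatedDiscs_two_pow_sq {x r : ℕ → ℝ} {k : ℕ} (hk : 1 ≤ k)
    (hx : ∀ n, x n = 2 ^ ((n + k) ^ 2)) (hr : ∀ n, r n = (1 / 2) ^ (n + k + 2)) :
    SeparatedDiscs (fun n => √(x n ^ 2 + r n ^ 2)) r fun n => x n / 2 := by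
  refine separatedDiscs_of_four_mul_le (fun n => ?_) (fun n => ?_) (fun n => ?_) (fun n => ?_)
  · rw [hr]
    positivity
  · rw [hr]
    exact pow_le_one₀ (by norm_num) (by norm_num)
  · rw [hx]
    exact le_self_pow₀ one_le_two (by positivity)
  · rw [hx, hx, show (4 : ℝ) = 2 ^ 2 by norm_num, ← pow_add]
    have hsq : (n + 1 + k) ^ 2 = (n + k) ^ 2 + 2 * (n + k) + 1 := by ring
    exact pow_le_pow_right₀ one_le_two (by rw [hsq]; lia)

theorem setOf_exists_ge_eq_range_add {β : Type*} (f : ℕ → β) (k : ℕ) :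
    {b | ∃ j ≥ k, b = f j} = range fun n => f (n + k) := by
  ext b
  constructor
  · rintro ⟨j, hj, rfl⟩
    exact ⟨j - k, congrArg f (Nat.sub_add_cancel hj)⟩
  · rintro ⟨n, rfl⟩
    exact ⟨n + k, Nat.le_add_left k n, rfl⟩

theorem limit_set_dimension_bound_general
    (x r lam : ℕ → ℝ)
    (hx : ∀ j : ℕ, 1 ≤ j → x j = 2 ^ (j ^ 2))
    (hr : ∀ j : ℕ, 1 ≤ j → r j = (2:ℝ) ^ (-(j : ℤ) - 2))
    (hlam : ∀ j : ℕ, 1 ≤ j →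
      lam j = 1 + (2 * (x j) ^ 2 + 2 * x j * Real.sqrt ((x j) ^ 2 + (r j) ^ 2)) / (r j) ^ 2)
    (M : ℕ → SL(2, ℝ))
    (hM : ∀ j : ℕ, 1 ≤ j → ((M j : Matrix (Fin 2) (Fin 2) ℝ)) =
      (1 / (2 * x j * Real.sqrt (lam j))) •
        !![x j * (lam j + 1), (x j) ^ 2 * (lam j - 1);
           lam j - 1, x j * (lam j + 1)])
    (k : ℕ) (hk : 1 ≤ k)
    (Γk : Subgroup SL(2, ℝ)) (hΓk : Γk = Subgroup.closure {g : SL(2, ℝ) | ∃ j ≥ k, g = M j}) :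
    dimH {w : ℂ | AccPt w (Filter.principal
        {z : ℂ | ∃ γ ∈ Γk, z = ((γ • UpperHalfPlane.I : ℍ) : ℂ)})}
      ≤ ENNReal.ofReal (1 / (2 * k)) := by
  have hk0 : (0 : ℝ) < 1 / (2 * k) := by positivity
  have hx' : ∀ n, x (n + k) = 2 ^ ((n + k) ^ 2) := fun n => hx _ (by lia)
  have hr' : ∀ n, r (n + k) = (1 / 2) ^ (n + k + 2) := fun n => by
    rw [hr _ (by lia), two_zpow_neg_sub_two]
  have hdiscs := separatedDiscs_two_pow_sq hk hx' hr'
  have hact : ∀ n (z : ℍ), ((M (n + k) • z : ℍ) : ℂ) =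
      discPairing √(x (n + k) ^ 2 + r (n + k) ^ 2) (r (n + k)) z := fun n =>
    coe_smul_eq_discPairing_of_matrix_eq (by
      rw [hM _ (by lia), hyperbolic_matrix_eq_smul (hdiscs.radius_pos n).ne' (hlam _ (by lia)),
        smul_smul])
  rw [hΓk, setOf_exists_ge_eq_range_add]
  refine hdiscs.dimH_derivedSet_orbit_le hact UpperHalfPlane.I_re hk0 ?_ ?_
  · simp only [hr', hx', one_half_pow_div_two_pow_half_sq]
    exact two_mul_tsum_one_half_pow_rpow_lt_one hk
  · simp only [hr', add_assoc]
    exact tsum_one_half_pow_rpow_ne_top (k + 2) hk0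

theorem limit_set_dimension_bound
    (x r lam : ℕ → ℝ)
    (hx : ∀ j : ℕ, 1 ≤ j → x j = 2 ^ (j ^ 2))
    (hr : ∀ j : ℕ, 1 ≤ j → r j = (2:ℝ) ^ (-(j : ℤ) - 2))
    (hlam : ∀ j : ℕ, 1 ≤ j →
      lam j = 1 + (2 * (x j) ^ 2 + 2 * x j * Real.sqrt ((x j) ^ 2 + (r j) ^ 2)) / (r j) ^ 2)
    (M : ℕ → SL(2, ℝ))
    (hM : ∀ j : ℕ, 1 ≤ j → ((M j : Matrix (Fin 2) (Fin 2) ℝ)) =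
      (1 / (2 * x j * Real.sqrt (lam j))) •
        !![x j * (lam j + 1), (x j) ^ 2 * (lam j - 1);
           lam j - 1, x j * (lam j + 1)])
    (k : ℕ) (hk : 2 ≤ k)
    (Γk : Subgroup SL(2, ℝ)) (hΓk : Γk = Subgroup.closure {g : SL(2, ℝ) | ∃ j ≥ k, g = M j}) :
    dimH {w : ℂ | AccPt w (Filter.principal
        {z : ℂ | ∃ γ ∈ Γk, z = ((γ • UpperHalfPlane.I : ℍ) : ℂ)})}
      ≤ ENNReal.ofReal (1 / (2 * k)) :=
  limit_set_dimension_bound_general x r lam hx hr hlam M hM k (one_le_two.trans hk) Γk hΓk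
end
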